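/- Let A, V, q, M, g, g^σ be as in the context. Then M(x,ξ) = q+V(x)+A(ξ) is a g^{(A,V)}-weight; explicitly: (1) (g-continuity) there exists C̃ > 0 such that for all X=(x,ξ), Y=(y,η) ∈ ℝⁿ×ℝⁿ, if g_X(X−Y) ≤ 1/C̃ then C̃^{-1}·M(Y) ≤ M(X) ≤ C̃·M(Y); and (2) (g-temperateness) there exist C̃ > 0 and an integer N ≥ 1 such that for all X, Y, both M(X) ≤ C̃·M(Y)·(1+g^σ_Y(X−Y))^N and M(Y) ≤ C̃·M(X)·(1+g^σ_Y(X−Y))^N hold. -/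

import Mathlib

open MeasureTheory RealInnerProductSpace
noncomputable section

/-- ℝⁿ with the Euclidean norm. -/
abbrev E (n : ℕ) : Type := EuclideanSpace ℝ (Fin n)

/-- A continuous `Γ : ℝⁿ → ℝ` is a τ-function (with parameter q). -/
def IsTauFunction {n : ℕ} (τ q : ℝ) (Γ : E n → ℝ) : Prop :=
  Continuous Γ ∧ (∀ x, 0 < Γ x + q / 4) ∧
  ∃ C₁ > (0:ℝ), ∃ R > (0:ℝ), ∀ x y : E n, R ≤ ‖x‖ → R ≤ ‖y‖ →
    C₁ * |(q / 2 + Γ x) ^ (1 / (2 * τ)) - (q / 2 + Γ y) ^ (1 / (2 * τ))| ≤ ‖x - y‖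

/-- The Hörmander metric g^{(A,V)}: g_{(x,ξ)}(t,τ′) = |t|²M^{-1/κ} + |τ′|²M^{-1/γ},
where M(x,ξ) = q + V(x) + A(ξ). -/
def gMet {n : ℕ} (κ γ q : ℝ) (A V : E n → ℝ) (X T : E n × E n) : ℝ :=
  ‖T.1‖ ^ 2 * (q + V X.1 + A X.2) ^ (-(1 / κ)) +
    ‖T.2‖ ^ 2 * (q + V X.1 + A X.2) ^ (-(1 / γ))

/-- The dual form g^σ_{(x,ξ)}(t,τ′) = |t|²M^{1/γ} + |τ′|²M^{1/κ}. -/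
def gSig {n : ℕ} (κ γ q : ℝ) (A V : E n → ℝ) (X T : E n × E n) : ℝ :=
  ‖T.1‖ ^ 2 * (q + V X.1 + A X.2) ^ (1 / γ) +
    ‖T.2‖ ^ 2 * (q + V X.1 + A X.2) ^ (1 / κ)

/-!
Off a ball the root `(q/2 + Γ)^(1/(2τ))` of a τ-function is Lipschitz, on the ball it is bounded,
and it is bounded below by a positive constant; hence `q/2 + Γ x ≤ D (q/2 + Γ y + |x - y|^(2τ))` for
all `x, y`. Adding the bounds for `V` and `A` gives `M(X) ≤ D (M(Y) + |x - y|^(2κ) + |ξ - η|^(2γ))`.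
If `g_X(X - Y) ≤ δ`, the displacement term is at most `(δ^κ + δ^γ) M(X)`, which is absorbed in the
left-hand side for small `δ`. As `M ≥ 1`, it is also at most `2 (1 + g^σ_Y(X - Y))^N` whenever
`N ≥ max κ γ`.
-/

section LipschitzOutsideBall

variable {F : Type*} [NormedAddCommGroup F] [NormedSpace ℝ F] {f : F → ℝ} {K R : ℝ}

lemma exists_norm_eq_and_norm_sub_le {x y : F} (hR : 0 < R) (hx : R ≤ ‖x‖) (hy : ‖y‖ ≤ R) :
    ∃ z : F, ‖z‖ = R ∧ ‖x - z‖ ≤ ‖x - y‖ := by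
  have hx_pos : 0 < ‖x‖ := hR.trans_le hx
  refine ⟨(R / ‖x‖) • x, ?_, ?_⟩
  · rw [norm_smul, Real.norm_of_nonneg (by positivity), div_mul_cancel₀ _ hx_pos.ne']
  · have hcoeff : 0 ≤ 1 - R / ‖x‖ := sub_nonneg.2 ((div_le_one hx_pos).2 hx)
    calc ‖x - (R / ‖x‖) • x‖ = ‖(1 - R / ‖x‖) • x‖ := by rw [sub_smul, one_smul]
      _ = ‖x‖ - R := by
        rw [norm_smul, Real.norm_of_nonneg hcoeff, sub_mul, one_mul, div_mul_cancel₀ _ hx_pos.ne']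
      _ ≤ ‖x‖ - ‖y‖ := by gcongr
      _ ≤ ‖x - y‖ := norm_sub_norm_le x y

lemma le_add_mul_norm_sub_add_of_lipschitz_outside_ball {B : ℝ} (hK : 0 ≤ K) (hR : 0 < R)
    (hf : ∀ x, 0 ≤ f x) (hB : ∀ x, ‖x‖ ≤ R → f x ≤ B)
    (hLip : ∀ x y, R ≤ ‖x‖ → R ≤ ‖y‖ → |f x - f y| ≤ K * ‖x - y‖) (x y : F) :
    f x ≤ f y + K * ‖x - y‖ + B := by
  have hB_nonneg : 0 ≤ B := (hf 0).trans (hB 0 (by simpa using hR.le))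
  have hfy : 0 ≤ f y := hf y
  have hKxy : 0 ≤ K * ‖x - y‖ := by positivity
  rcases le_total ‖x‖ R with hx | hx
  · linarith [hB x hx]
  rcases le_total R ‖y‖ with hy | hy
  · linarith [le_of_abs_le (hLip x y hx hy)]
  · obtain ⟨z, hz, hxz⟩ := exists_norm_eq_and_norm_sub_le hR hx hy
    have hKxz : K * ‖x - z‖ ≤ K * ‖x - y‖ := by gcongr
    linarith [le_of_abs_le (hLip x z hx hz.ge), hB z hz.le]

lemma exists_le_mul_add_norm_sub_of_lipschitz_outside_ball [ProperSpace F] {c : ℝ} (hK : 0 ≤ K)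
    (hR : 0 < R) (hcont : Continuous f) (hc : 0 < c) (hcf : ∀ x, c ≤ f x)
    (hLip : ∀ x y, R ≤ ‖x‖ → R ≤ ‖y‖ → |f x - f y| ≤ K * ‖x - y‖) :
    ∃ C > 0, ∀ x y, f x ≤ C * (f y + ‖x - y‖) := by
  obtain ⟨B, hB⟩ :=
    (isCompact_closedBall (0 : F) R).exists_bound_of_continuousOn hcont.continuousOn
  have hfB : ∀ x, ‖x‖ ≤ R → f x ≤ B := fun x hx => le_of_abs_le (hB x (by simpa using hx))
  have hf : ∀ x, 0 ≤ f x := fun x => hc.le.trans (hcf x)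
  have hB_nonneg : 0 ≤ B := (hf 0).trans (hfB 0 (by simpa using hR.le))
  refine ⟨1 + K + B / c, by positivity, fun x y => ?_⟩
  have hfy := hf y
  have hB_le : B ≤ B / c * f y := by
    rw [div_mul_eq_mul_div, le_div_iff₀ hc]
    gcongr
    exact hcf y
  calc f x ≤ f y + K * ‖x - y‖ + B :=
        le_add_mul_norm_sub_add_of_lipschitz_outside_ball hK hR hf hfB hLip x y
    _ ≤ f y + K * ‖x - y‖ + B / c * f y + (K * f y + ‖x - y‖ + B / c * ‖x - y‖) := by
        have : 0 ≤ K * f y + ‖x - y‖ + B / c * ‖x - y‖ := by positivity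
        linarith
    _ = (1 + K + B / c) * (f y + ‖x - y‖) := by ring

end LipschitzOutsideBall

section RealPowers

variable {p r t u v m S δ τ : ℝ}

lemma add_rpow_le_two_rpow_mul_rpow_add_rpow (hp : 0 ≤ p) (hu : 0 ≤ u) (hv : 0 ≤ v) :
    (u + v) ^ p ≤ 2 ^ p * (u ^ p + v ^ p) := by
  wlog huv : u ≤ v generalizing u v
  · rw [add_comm u, add_comm (u ^ p)]
    exact this hv hu (le_of_not_ge huv)
  calc (u + v) ^ p ≤ (2 * v) ^ p := by gcongr; linarith
    _ = 2 ^ p * v ^ p := Real.mul_rpow zero_le_two hv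
    _ ≤ 2 ^ p * (u ^ p + v ^ p) := by gcongr; exact le_add_of_nonneg_left (by positivity)

lemma le_mul_add_rpow_of_rpow_inv_le {C : ℝ} (hp : 0 < p) (hC : 0 ≤ C) (hu : 0 ≤ u)
    (hv : 0 ≤ v) (hr : 0 ≤ r) (h : u ^ p⁻¹ ≤ C * (v ^ p⁻¹ + r)) :
    u ≤ C ^ p * 2 ^ p * (v + r ^ p) :=
  calc u ≤ (C * (v ^ p⁻¹ + r)) ^ p := (Real.rpow_inv_le_iff_of_pos hu (by positivity) hp).1 h
    _ = C ^ p * (v ^ p⁻¹ + r) ^ p := Real.mul_rpow hC (by positivity)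
    _ ≤ C ^ p * (2 ^ p * ((v ^ p⁻¹) ^ p + r ^ p)) := by
        gcongr
        exact add_rpow_le_two_rpow_mul_rpow_add_rpow hp.le (by positivity) hr
    _ = C ^ p * 2 ^ p * (v + r ^ p) := by rw [Real.rpow_inv_rpow hv hp.ne', mul_assoc]

lemma rpow_two_mul_le_of_sq_le (hτ : 0 ≤ τ) (ht : 0 ≤ t) (h : t ^ 2 ≤ S) :
    t ^ (2 * τ) ≤ S ^ τ := by
  rw [Real.rpow_mul ht, Real.rpow_two]
  gcongr

lemma rpow_two_mul_le_rpow_mul (hτ : 0 < τ) (ht : 0 ≤ t) (hm : 0 < m) (hδ : 0 ≤ δ)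
    (h : t ^ 2 * m ^ (-(1 / τ)) ≤ δ) : t ^ (2 * τ) ≤ δ ^ τ * m := by
  have hsq : t ^ 2 ≤ δ * m ^ τ⁻¹ := by
    rwa [one_div, Real.rpow_neg hm.le, mul_inv_le_iff₀ (by positivity)] at h
  calc t ^ (2 * τ) ≤ (δ * m ^ τ⁻¹) ^ τ := rpow_two_mul_le_of_sq_le hτ.le ht hsq
    _ = δ ^ τ * m := by
        rw [Real.mul_rpow hδ (by positivity), Real.rpow_inv_rpow hm.le hτ.ne']

lemma rpow_two_mul_le_one_add_pow {N : ℕ} (hτ : 0 ≤ τ) (hτN : τ ≤ N) (ht : 0 ≤ t) (hm : 1 ≤ m)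
    (h : t ^ 2 * m ≤ S) : t ^ (2 * τ) ≤ (1 + S) ^ N := by
  have hsq : t ^ 2 ≤ 1 + S := by linarith [le_mul_of_one_le_right (sq_nonneg t) hm]
  have hS : 0 ≤ S := (by positivity : 0 ≤ t ^ 2 * m).trans h
  calc t ^ (2 * τ) ≤ (1 + S) ^ τ := rpow_two_mul_le_of_sq_le hτ ht hsq
    _ ≤ (1 + S) ^ (N : ℝ) := Real.rpow_le_rpow_of_exponent_le (by linarith) hτN
    _ = (1 + S) ^ N := Real.rpow_natCast _ N

lemma exists_pos_rpow_add_rpow_le {κ γ ε : ℝ} (hκ : 0 < κ) (hγ : 0 < γ) (hε : 0 < ε) :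
    ∃ δ > 0, δ ^ κ + δ ^ γ ≤ ε := by
  have hcont : Continuous fun δ : ℝ => δ ^ κ + δ ^ γ :=
    (Real.continuous_rpow_const hκ.le).add (Real.continuous_rpow_const hγ.le)
  have hsmall : ∀ᶠ δ : ℝ in nhds 0, δ ^ κ + δ ^ γ < ε :=
    hcont.continuousAt.eventually_lt_const
      (by simpa only [Real.zero_rpow hκ.ne', Real.zero_rpow hγ.ne', add_zero] using hε)
  have hpos : ∀ᶠ δ : ℝ in nhdsWithin 0 (Set.Ioi 0), 0 < δ := self_mem_nhdsWithin
  obtain ⟨δ, hδ_pos, hδ⟩ := (hpos.and (hsmall.filter_mono nhdsWithin_le_nhds)).exists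
  exact ⟨δ, hδ_pos, hδ.le⟩

end RealPowers

section PhaseSpace

variable {n : ℕ} {κ γ q : ℝ} {A V : E n → ℝ}

namespace IsTauFunction

variable {τ : ℝ} {Γ : E n → ℝ}

lemma half_add_pos (hΓ : IsTauFunction τ q Γ) (hq : 0 < q) (x : E n) : 0 < q / 2 + Γ x := by
  linarith [hΓ.2.1 x]

lemma exists_rpow_le_mul_add_norm_sub (hΓ : IsTauFunction τ q Γ) (hτ : 0 < τ) (hq : 0 < q) :
    ∃ C > 0, ∀ x y : E n,
      (q / 2 + Γ x) ^ (2 * τ)⁻¹ ≤ C * ((q / 2 + Γ y) ^ (2 * τ)⁻¹ + ‖x - y‖) := by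
  obtain ⟨hcont, hlower, C₁, hC₁, R, hR, hLip⟩ := hΓ
  have hexp : 0 ≤ (2 * τ)⁻¹ := by positivity
  refine exists_le_mul_add_norm_sub_of_lipschitz_outside_ball (K := C₁⁻¹) (c := (q / 4) ^ (2 * τ)⁻¹)
    (by positivity) hR ((continuous_const.add hcont).rpow_const fun _ => .inr hexp)
    (by positivity) (fun x => ?_) (fun x y hx hy => ?_)
  · exact Real.rpow_le_rpow (by positivity) (by linarith [hlower x]) hexp
  · rw [le_inv_mul_iff₀ hC₁]
    simpa only [one_div] using hLip x y hx hy

lemma exists_le_mul_add_rpow_norm_sub (hΓ : IsTauFunction τ q Γ) (hτ : 0 < τ) (hq : 0 < q) :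
    ∃ D > 0, ∀ x y : E n, q / 2 + Γ x ≤ D * (q / 2 + Γ y + ‖x - y‖ ^ (2 * τ)) := by
  obtain ⟨C, hC, hroot⟩ := hΓ.exists_rpow_le_mul_add_norm_sub hτ hq
  exact ⟨C ^ (2 * τ) * 2 ^ (2 * τ), by positivity, fun x y =>
    le_mul_add_rpow_of_rpow_inv_le (by positivity) hC.le (hΓ.half_add_pos hq x).le
      (hΓ.half_add_pos hq y).le (norm_nonneg _) (hroot x y)⟩

end IsTauFunction

/-- The weight `M(x, ξ) = q + V(x) + A(ξ)` as a function on phase space. -/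
def phaseWeight (q : ℝ) (A V : E n → ℝ) (X : E n × E n) : ℝ :=
  q + V X.1 + A X.2

/-- The size `|t|^(2κ) + |τ|^(2γ)` of a phase space vector `(t, τ)`, which scales like the weight:
vectors of bounded `g_X`-length have size `O(M(X))`. -/
def anisotropicSize (κ γ : ℝ) (T : E n × E n) : ℝ :=
  ‖T.1‖ ^ (2 * κ) + ‖T.2‖ ^ (2 * γ)

lemma anisotropicSize_sub_comm (κ γ : ℝ) (X Y : E n × E n) :
    anisotropicSize κ γ (X - Y) = anisotropicSize κ γ (Y - X) := by
  simp only [anisotropicSize, Prod.fst_sub, Prod.snd_sub, norm_sub_rev]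

lemma phaseWeight_pos (hq : 0 < q) (hA : IsTauFunction γ q A) (hV : IsTauFunction κ q V)
    (X : E n × E n) : 0 < phaseWeight q A V X := by
  rw [phaseWeight]
  linarith [hA.half_add_pos hq X.2, hV.half_add_pos hq X.1]

lemma exists_phaseWeight_le_mul_add_anisotropicSize (hκ : 0 < κ) (hγ : 0 < γ) (hq : 0 < q)
    (hA : IsTauFunction γ q A) (hV : IsTauFunction κ q V) :
    ∃ D > 0, ∀ X Y : E n × E n,
      phaseWeight q A V X ≤ D * (phaseWeight q A V Y + anisotropicSize κ γ (X - Y)) := by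
  obtain ⟨D₁, hD₁, hV_le⟩ := hV.exists_le_mul_add_rpow_norm_sub hκ hq
  obtain ⟨D₂, _, hA_le⟩ := hA.exists_le_mul_add_rpow_norm_sub hγ hq
  refine ⟨max D₁ D₂, by positivity, fun X Y => ?_⟩
  have hVY := hV.half_add_pos hq Y.1
  have hAY := hA.half_add_pos hq Y.2
  calc phaseWeight q A V X = (q / 2 + V X.1) + (q / 2 + A X.2) := by rw [phaseWeight]; ring
    _ ≤ D₁ * (q / 2 + V Y.1 + ‖X.1 - Y.1‖ ^ (2 * κ)) +
          D₂ * (q / 2 + A Y.2 + ‖X.2 - Y.2‖ ^ (2 * γ)) := add_le_add (hV_le _ _) (hA_le _ _)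
    _ ≤ max D₁ D₂ * (q / 2 + V Y.1 + ‖X.1 - Y.1‖ ^ (2 * κ)) +
          max D₁ D₂ * (q / 2 + A Y.2 + ‖X.2 - Y.2‖ ^ (2 * γ)) := by
        gcongr
        exacts [le_max_left _ _, le_max_right _ _]
    _ = max D₁ D₂ * (phaseWeight q A V Y + anisotropicSize κ γ (X - Y)) := by
        rw [phaseWeight, anisotropicSize, Prod.fst_sub, Prod.snd_sub]
        ring

lemma anisotropicSize_le_of_gMet_le {δ : ℝ} {X T : E n × E n} (hκ : 0 < κ) (hγ : 0 < γ)
    (hδ : 0 ≤ δ) (hX : 0 < phaseWeight q A V X) (hg : gMet κ γ q A V X T ≤ δ) :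
    anisotropicSize κ γ T ≤ (δ ^ κ + δ ^ γ) * phaseWeight q A V X := by
  change ‖T.1‖ ^ 2 * phaseWeight q A V X ^ (-(1 / κ)) +
    ‖T.2‖ ^ 2 * phaseWeight q A V X ^ (-(1 / γ)) ≤ δ at hg
  rw [anisotropicSize, add_mul]
  exact add_le_add
    (rpow_two_mul_le_rpow_mul hκ (norm_nonneg _) hX hδ
      (le_of_add_le_of_nonneg_left hg (by positivity)))
    (rpow_two_mul_le_rpow_mul hγ (norm_nonneg _) hX hδ
      (le_of_add_le_of_nonneg_right hg (by positivity)))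

lemma gSig_nonneg {X : E n × E n} (hX : 0 ≤ phaseWeight q A V X) (T : E n × E n) :
    0 ≤ gSig κ γ q A V X T := by
  change 0 ≤ ‖T.1‖ ^ 2 * phaseWeight q A V X ^ (1 / γ) +
    ‖T.2‖ ^ 2 * phaseWeight q A V X ^ (1 / κ)
  positivity

lemma anisotropicSize_le_one_add_gSig_pow {N : ℕ} {X : E n × E n} (hκ : 0 < κ) (hγ : 0 < γ)
    (hκN : κ ≤ N) (hγN : γ ≤ N) (hX : 1 ≤ phaseWeight q A V X) (T : E n × E n) :
    anisotropicSize κ γ T ≤ 2 * (1 + gSig κ γ q A V X T) ^ N := by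
  have hsig : ‖T.1‖ ^ 2 * phaseWeight q A V X ^ (1 / γ) +
      ‖T.2‖ ^ 2 * phaseWeight q A V X ^ (1 / κ) ≤ gSig κ γ q A V X T := le_rfl
  rw [anisotropicSize, two_mul (_ ^ N)]
  exact add_le_add
    (rpow_two_mul_le_one_add_pow hκ.le hκN (norm_nonneg _) (Real.one_le_rpow hX (by positivity))
      (le_of_add_le_of_nonneg_left hsig (by positivity)))
    (rpow_two_mul_le_one_add_pow hγ.le hγN (norm_nonneg _) (Real.one_le_rpow hX (by positivity))
      (le_of_add_le_of_nonneg_right hsig (by positivity)))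

lemma exists_phaseWeight_comparable_of_gMet_le {D : ℝ} (hκ : 0 < κ) (hγ : 0 < γ) (hD : 0 < D)
    (hM : ∀ X Y : E n × E n,
      phaseWeight q A V X ≤ D * (phaseWeight q A V Y + anisotropicSize κ γ (X - Y)))
    (hpos : ∀ X, 0 < phaseWeight q A V X) :
    ∃ C > 0, ∀ X Y : E n × E n, gMet κ γ q A V X (X - Y) ≤ 1 / C →
      C⁻¹ * phaseWeight q A V Y ≤ phaseWeight q A V X ∧
        phaseWeight q A V X ≤ C * phaseWeight q A V Y := by
  obtain ⟨δ, hδ, hδ_le⟩ := exists_pos_rpow_add_rpow_le hκ hγ (by positivity : 0 < 1 / (2 * D))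
  refine ⟨2 * D + 1 + δ⁻¹, by positivity, fun X Y hg => ?_⟩
  have hX := hpos X
  have hY := hpos Y
  have hg_le : gMet κ γ q A V X (X - Y) ≤ δ := by
    refine hg.trans ?_
    rw [one_div]
    exact inv_le_of_inv_le₀ hδ (by linarith)
  have habsorb : D * anisotropicSize κ γ (X - Y) ≤ phaseWeight q A V X / 2 :=
    calc D * anisotropicSize κ γ (X - Y)
        ≤ D * (1 / (2 * D) * phaseWeight q A V X) := by
          gcongr
          exact (anisotropicSize_le_of_gMet_le hκ hγ hδ.le hX hg_le).trans (by gcongr)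
      _ = phaseWeight q A V X / 2 := by field_simp
  have hXY := hM X Y
  have hYX := hM Y X
  rw [anisotropicSize_sub_comm] at hYX
  constructor
  · rw [inv_mul_le_iff₀ (by positivity)]
    have : 0 < (D + δ⁻¹) * phaseWeight q A V X := by positivity
    linarith
  · have : 0 < (1 + δ⁻¹) * phaseWeight q A V Y := by positivity
    linarith

lemma exists_phaseWeight_le_mul_one_add_gSig_pow {D : ℝ} (hκ : 0 < κ) (hγ : 0 < γ) (hD : 0 < D)
    (hM : ∀ X Y : E n × E n,
      phaseWeight q A V X ≤ D * (phaseWeight q A V Y + anisotropicSize κ γ (X - Y)))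
    (hone : ∀ X, 1 ≤ phaseWeight q A V X) :
    ∃ C > 0, ∃ N : ℕ, 1 ≤ N ∧ ∀ X Y : E n × E n,
      phaseWeight q A V X ≤ C * phaseWeight q A V Y * (1 + gSig κ γ q A V Y (X - Y)) ^ N ∧
      phaseWeight q A V Y ≤ C * phaseWeight q A V X * (1 + gSig κ γ q A V Y (X - Y)) ^ N := by
  obtain ⟨N, hN⟩ := exists_nat_ge (max 1 (max κ γ))
  obtain ⟨hN_one, hκN, hγN⟩ : 1 ≤ (N : ℝ) ∧ κ ≤ N ∧ γ ≤ N := by simpa only [max_le_iff] using hN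
  refine ⟨3 * D, by positivity, N, by exact_mod_cast hN_one, fun X Y => ?_⟩
  set P := (1 + gSig κ γ q A V Y (X - Y)) ^ N
  have hP : 1 ≤ P :=
    one_le_pow₀ (le_add_of_nonneg_right (gSig_nonneg (zero_le_one.trans (hone Y)) _))
  have hsize : anisotropicSize κ γ (X - Y) ≤ 2 * P :=
    anisotropicSize_le_one_add_gSig_pow hκ hγ hκN hγN (hone Y) _
  have hmul_le : ∀ m, 1 ≤ m → D * (m + anisotropicSize κ γ (X - Y)) ≤ 3 * D * m * P := by
    intro m hm
    calc D * (m + anisotropicSize κ γ (X - Y)) ≤ D * (m * P + 2 * (m * P)) := by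
          gcongr
          · exact le_mul_of_one_le_right (by linarith) hP
          · exact hsize.trans (by gcongr; exact le_mul_of_one_le_left (by linarith) hm)
      _ = 3 * D * m * P := by ring
  exact ⟨(hM X Y).trans (hmul_le _ (hone Y)),
    (hM Y X).trans (anisotropicSize_sub_comm κ γ Y X ▸ hmul_le _ (hone X))⟩

end PhaseSpace

/-- M(x,ξ) = q+V(x)+A(ξ) is a g^{(A,V)}-weight: it is g-continuous
and g-temperate. -/
theorem statement6 {n : ℕ} (hn : 1 ≤ n) (κ γ q : ℝ) (hκ : 0 < κ) (hγ : 0 < γ) (hq : 0 < q)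
    (A V : E n → ℝ) (hA : IsTauFunction γ q A) (hV : IsTauFunction κ q V)
    (hM : ∀ x ξ : E n, 1 ≤ q + V x + A ξ) :
    (∃ Ct > (0:ℝ), ∀ X Y : E n × E n,
      gMet κ γ q A V X (X - Y) ≤ 1 / Ct →
        Ct⁻¹ * (q + V Y.1 + A Y.2) ≤ q + V X.1 + A X.2 ∧
        q + V X.1 + A X.2 ≤ Ct * (q + V Y.1 + A Y.2)) ∧
    (∃ Ct > (0:ℝ), ∃ N : ℕ, 1 ≤ N ∧ ∀ X Y : E n × E n,
      q + V X.1 + A X.2 ≤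
          Ct * (q + V Y.1 + A Y.2) * (1 + gSig κ γ q A V Y (X - Y)) ^ N ∧
      q + V Y.1 + A Y.2 ≤
          Ct * (q + V X.1 + A X.2) * (1 + gSig κ γ q A V Y (X - Y)) ^ N) := by
  obtain ⟨D, hD, hM_le⟩ := exists_phaseWeight_le_mul_add_anisotropicSize hκ hγ hq hA hV
  exact ⟨exists_phaseWeight_comparable_of_gMet_le hκ hγ hD hM_le (phaseWeight_pos hq hA hV),
    exists_phaseWeight_le_mul_one_add_gSig_pow hκ hγ hD hM_le fun X => hM X.1 X.2⟩
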